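/- For each C > 0 there exists a classical abstract Swiss cheese B = ((b_n, s_n)) with b_0 = 0 and s_0 = 1 such that the unit circle 𝕋 is a subset of X_B, R(X_B) has no non-zero bounded point derivation at any point of X_B, and ∑_{n ≥ 1} s_n/d_n² ≤ C, where d_n is the distance from the disk ball(b_n, s_n) to 𝕋 if s_n > 0 and d_n = 1 if s_n = 0. -/

import Mathlib

open Metric Set

/-- `R₀(X)`: the restrictions to `X` of rational functions with poles off `X`, i.e. quotients
`p/q` of complex polynomials with `q` nonvanishing on `X`. -/
def R0set (X : Set ℂ) : Set C(X, ℂ) :=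
  {f | ∃ p q : Polynomial ℂ, (∀ x : X, q.eval (x : ℂ) ≠ 0) ∧
    ∀ x : X, f x = p.eval (x : ℂ) / q.eval (x : ℂ)}

/-- `R(X)`: the uniform closure in `C(X, ℂ)` of the rational functions with poles off `X`.
(On the compact space `X` the topology of `C(X, ℂ)` is that of uniform convergence.) -/
noncomputable def Rx (X : Set ℂ) [CompactSpace X] : Subalgebra ℂ C(X, ℂ) :=
  (Algebra.adjoin ℂ (R0set X)).topologicalClosure

/-- A bounded point derivation on `R(X)` at `x`: a continuous linear functional `d` on `R(X)`
satisfying `d(fg) = f(x)d(g) + d(f)g(x)` for all `f, g ∈ R(X)`. -/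
def IsBPD (X : Set ℂ) [CompactSpace X] (x : X) (d : Rx X →L[ℂ] ℂ) : Prop :=
  ∀ f g : Rx X, d (f * g) = (f : C(X, ℂ)) x * d g + d f * (g : C(X, ℂ)) x

/-- `R(X)` is regular: for every closed `E ⊆ X` and `x ∈ X ∖ E` there is `f ∈ R(X)` with
`f(x) = 1` and `f ≡ 0` on `E`. -/
def RxRegular (X : Set ℂ) [CompactSpace X] : Prop :=
  ∀ E : Set X, IsClosed E → ∀ x : X, x ∉ E →
    ∃ f ∈ Rx X, f x = 1 ∧ ∀ y ∈ E, f y = 0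

open Metric Set

/-- An abstract Swiss cheese: a sequence `((a_n, r_n))_{n ≥ 0}` of centres `a n ∈ ℂ` and
non-negative radii `r n ∈ [0, ∞)`. -/
structure SwissCheese where
  a : ℕ → ℂ
  r : ℕ → ℝ
  r_nonneg : ∀ n, 0 ≤ r n

namespace SwissCheese

/-- The associated Swiss cheese set `X_A = closedBall(a₀, r₀) ∖ ⋃_{n ≥ 1} ball(a_n, r_n)`. -/
def cheeseSet (A : SwissCheese) : Set ℂ :=
  closedBall (A.a 0) (A.r 0) \ ⋃ n ∈ Set.Ici 1, ball (A.a n) (A.r n)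

/-- The significant index set `S_A = {n ≥ 1 : r_n > 0}`. -/
def sig (A : SwissCheese) : Set ℕ := {n | 1 ≤ n ∧ 0 < A.r n}

/-- The radius sum `ρ(A) = ∑_{n ≥ 1} r_n` is finite. -/
def RadSummable (A : SwissCheese) : Prop := Summable fun n => A.r (n + 1)

/-- The radius sum `ρ(A) = ∑_{n ≥ 1} r_n`. -/
noncomputable def radSum (A : SwissCheese) : ℝ := ∑' n, A.r (n + 1)

/-- The discrepancy `δ₁(A) = r₀ − ∑_{n ≥ 1} r_n`. -/
noncomputable def disc (A : SwissCheese) : ℝ := A.r 0 - A.radSum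

/-- `A` is classical: `ρ(A) < ∞`, `r₀ > 0`, each significant closed disk is contained in
`ball(a₀, r₀)`, and distinct significant closed disks are disjoint. -/
def IsClassical (A : SwissCheese) : Prop :=
  A.RadSummable ∧ 0 < A.r 0 ∧ ∀ k ∈ A.sig,
    closedBall (A.a k) (A.r k) ⊆ ball (A.a 0) (A.r 0) ∧
    ∀ l ∈ A.sig, l ≠ k → closedBall (A.a k) (A.r k) ∩ closedBall (A.a l) (A.r l) = ∅

/-- `A` is semiclassical: `ρ(A) < ∞`, `r₀ > 0`, each significant open disk is contained in
`ball(a₀, r₀)`, and distinct significant open disks are disjoint. -/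
def IsSemiclassical (A : SwissCheese) : Prop :=
  A.RadSummable ∧ 0 < A.r 0 ∧ ∀ k ∈ A.sig,
    ball (A.a k) (A.r k) ⊆ ball (A.a 0) (A.r 0) ∧
    ∀ l ∈ A.sig, l ≠ k → ball (A.a k) (A.r k) ∩ ball (A.a l) (A.r l) = ∅

/-- `A` is annular: `a₀ = a₁` and `r₀ > r₁ > 0`. -/
def IsAnnular (A : SwissCheese) : Prop := A.a 0 = A.a 1 ∧ A.r 1 < A.r 0 ∧ 0 < A.r 1

/-- The annular radius sum `ρ_ann(A) = ∑_{n ≥ 2} r_n`. -/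
noncomputable def annRadSum (A : SwissCheese) : ℝ := ∑' n, A.r (n + 2)

/-- The annular discrepancy `δ_ann(A) = r₀ − r₁ − 2 ∑_{n ≥ 2} r_n`. -/
noncomputable def annDisc (A : SwissCheese) : ℝ := A.r 0 - A.r 1 - 2 * A.annRadSum

/-- `A` is redundancy-free: every significant open disk meets `closedBall(a₀, r₀)`, and no
significant open disk is contained in another one. -/
def IsRedundancyFree (A : SwissCheese) : Prop :=
  ∀ k ∈ A.sig, (ball (A.a k) (A.r k) ∩ closedBall (A.a 0) (A.r 0)).Nonempty ∧
    ∀ l ∈ A.sig, l ≠ k → ¬ ball (A.a k) (A.r k) ⊆ ball (A.a l) (A.r l)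

/-- `H_A(U)`: the set of significant indices whose closed disk meets `U`. -/
def HSet (A : SwissCheese) (U : Set ℂ) : Set ℕ :=
  {n | n ∈ A.sig ∧ (closedBall (A.a n) (A.r n) ∩ U).Nonempty}

/-- `ρ_U(A) = ∑_{n ∈ H_A(U)} r_n`. -/
noncomputable def rhoU (A : SwissCheese) (U : Set ℂ) : ℝ := ∑' n : A.HSet U, A.r n

/-- The error set `E(A)`. -/
def errorSet (A : SwissCheese) : Set ℂ :=
  (⋃ m ∈ A.sig, ⋃ n ∈ A.sig, ⋃ _ : m ≠ n,
      closedBall (A.a m) (A.r m) ∩ closedBall (A.a n) (A.r n)) ∪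
    ⋃ n ∈ A.sig, (ball (A.a 0) (A.r 0))ᶜ ∩ closedBall (A.a n) (A.r n)

/-- A Swiss cheese set is compact. -/
instance (A : SwissCheese) : CompactSpace A.cheeseSet :=
  isCompact_iff_compactSpace.mp
    ((isCompact_closedBall _ _).diff (isOpen_biUnion fun _ _ => isOpen_ball))

end SwissCheese

/-- The distance from a set `s ⊆ ℂ` to the unit circle `𝕋`:
`inf {|z − w| : z ∈ s, w ∈ 𝕋}`. -/
noncomputable def distToCircle (s : Set ℂ) : ℝ :=
  sInf {d : ℝ | ∃ z ∈ s, ∃ w ∈ sphere (0 : ℂ) 1, d = dist z w}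

/-- `d_n` for a Swiss cheese `B`: the distance from `ball(b_n, s_n)` to `𝕋` if `s_n > 0`,
and `1` if `s_n = 0`. (Here the index `n ≥ 1` is written as `n + 1`.) -/
noncomputable def distT (B : SwissCheese) (n : ℕ) : ℝ :=
  if 0 < B.r (n + 1) then distToCircle (ball (B.a (n + 1)) (B.r (n + 1))) else 1

/-!
A bounded point derivation `d` at `x` sends `(z - a)⁻¹` to `-d(z)/(x - a)²`, so `d(z) = 0`, and
hence `d = 0`, as soon as there are rational functions, uniformly bounded on `X`, whose
derivatives at `x` are arbitrarily large. Such functions are sums of simple poles `c/(z - a)` with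
`|c| = 1`. At a point of the unit circle a single pole just outside the disk suffices.

For the other points, place disks of radius `r = ε h²` at the points of a grid of mesh `h`: their
number is `O(h⁻²)`, so their total weight is `O(ε)` however small `h` is. For `N ≲ 1/(ε h)`, the
sum of `1/|z - a|` over an `N × N` block of grid points is at most `1/r + O(N/h) = O(1/r)` off the
disks, while the sum of `1/|x - a|²` over a block with corner at `x` is of order
`h⁻² log N = ε log N / r`. The ratio is `ε log N`, which can be made large for fixed `ε`. Earlier
holes do not interfere, as at most one of them is near `x`, and the block may be taken in a
quadrant facing away from it. Iterating with `ε → 0` treats all interior points that survive.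
-/

section PointDerivations

variable {X : Set ℂ} [CompactSpace X]

namespace Rx

lemma R0set_subset : R0set X ⊆ Rx X :=
  Algebra.subset_adjoin.trans (Subalgebra.le_topologicalClosure _)

/-- The coordinate function `z ↦ z` as an element of `R(X)`. -/
def coord (X : Set ℂ) [CompactSpace X] : Rx X :=
  ⟨⟨Subtype.val, continuous_subtype_val⟩, R0set_subset ⟨Polynomial.X, 1, by simp, by simp⟩⟩

/-- The function `z ↦ (z - a)⁻¹` as an element of `R(X)`, for a pole `a` off `X`. -/
noncomputable def simplePole {a : ℂ} (ha : a ∉ X) : Rx X :=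
  have hne (z : X) : (z : ℂ) - a ≠ 0 := sub_ne_zero.mpr (ne_of_mem_of_not_mem z.2 ha)
  ⟨⟨fun z => ((z : ℂ) - a)⁻¹, (continuous_subtype_val.sub continuous_const).inv₀ hne⟩,
    R0set_subset ⟨1, Polynomial.X - Polynomial.C a, by simpa using hne, by simp⟩⟩

lemma simplePole_mul_coord_sub {a : ℂ} (ha : a ∉ X) :
    simplePole ha * (coord X - algebraMap ℂ (Rx X) a) = 1 := by
  ext z
  exact inv_mul_cancel₀ (sub_ne_zero.mpr (ne_of_mem_of_not_mem z.2 ha))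

lemma aeval_coord_apply (p : Polynomial ℂ) (z : X) :
    (Polynomial.aeval (coord X) p : C(X, ℂ)) z = p.eval (z : ℂ) := by
  let evalAt : Rx X →ₐ[ℂ] ℂ := (ContinuousMap.evalAlgHom ℂ ℂ z).comp (Rx X).val
  change evalAt (Polynomial.aeval (coord X) p) = _
  rw [← Polynomial.aeval_algHom_apply]
  exact congrFun (Polynomial.coe_aeval_eq_eval _) p

end Rx

namespace IsBPD

variable {x : X} {d : Rx X →L[ℂ] ℂ}

lemma map_one (hd : IsBPD X x d) : d 1 = 0 := by
  simpa using hd 1 1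

lemma map_algebraMap (hd : IsBPD X x d) (c : ℂ) : d (algebraMap ℂ (Rx X) c) = 0 := by
  rw [Algebra.algebraMap_eq_smul_one, map_smul, hd.map_one, smul_zero]

lemma map_simplePole (hd : IsBPD X x d) {a : ℂ} (ha : a ∉ X) :
    d (Rx.simplePole ha) = -d (Rx.coord X) / ((x : ℂ) - a) ^ 2 := by
  have leibniz : 0 = ((x : ℂ) - a)⁻¹ * d (Rx.coord X) + d (Rx.simplePole ha) * ((x : ℂ) - a) := by
    have h := hd (Rx.simplePole ha) (Rx.coord X - algebraMap ℂ (Rx X) a)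
    rwa [Rx.simplePole_mul_coord_sub, hd.map_one, map_sub, hd.map_algebraMap, sub_zero] at h
  have hxa : (x : ℂ) - a ≠ 0 := sub_ne_zero.mpr (ne_of_mem_of_not_mem x.2 ha)
  field_simp at leibniz ⊢
  linear_combination -leibniz

lemma map_aeval_coord_eq_zero (hd : IsBPD X x d) (hcoord : d (Rx.coord X) = 0)
    (p : Polynomial ℂ) : d (Polynomial.aeval (Rx.coord X) p) = 0 := by
  induction p using Polynomial.induction_on with
  | C c => rw [Polynomial.aeval_C, hd.map_algebraMap]
  | add p q hp hq => rw [map_add, map_add, hp, hq, add_zero]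
  | monomial n c ih =>
    rw [pow_succ, ← mul_assoc, map_mul, hd, ih, Polynomial.aeval_X, hcoord, mul_zero, zero_mul,
      add_zero]

lemma map_eq_zero_of_mem_R0set (hd : IsBPD X x d) (hcoord : d (Rx.coord X) = 0) {f : C(X, ℂ)}
    (hf : f ∈ R0set X) : d ⟨f, Rx.R0set_subset hf⟩ = 0 := by
  obtain ⟨p, q, hq, hpq⟩ := id hf
  have mul_denominator : (⟨f, Rx.R0set_subset hf⟩ : Rx X) * Polynomial.aeval (Rx.coord X) q =
      Polynomial.aeval (Rx.coord X) p := by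
    ext z
    change f z * (Polynomial.aeval (Rx.coord X) q : C(X, ℂ)) z = _
    rw [Rx.aeval_coord_apply, Rx.aeval_coord_apply, hpq, div_mul_cancel₀ _ (hq z)]
  have leibniz := hd ⟨f, Rx.R0set_subset hf⟩ (Polynomial.aeval (Rx.coord X) q)
  rw [mul_denominator, hd.map_aeval_coord_eq_zero hcoord, hd.map_aeval_coord_eq_zero hcoord,
    Rx.aeval_coord_apply, mul_zero, zero_add] at leibniz
  exact (mul_eq_zero.mp leibniz.symm).resolve_right (hq x)

theorem eq_zero_of_map_coord_eq_zero (hd : IsBPD X x d) (hcoord : d (Rx.coord X) = 0) :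
    d = 0 := by
  let A := Algebra.adjoin ℂ (R0set X)
  have hA : A ≤ Rx X := A.le_topologicalClosure
  have vanishes_on_adjoin (f : C(X, ℂ)) (hf : f ∈ A) : d ⟨f, hA hf⟩ = 0 := by
    induction hf using Algebra.adjoin_induction with
    | mem f hf => exact hd.map_eq_zero_of_mem_R0set hcoord hf
    | algebraMap c => exact hd.map_algebraMap c
    | add f g hf hg hdf hdg => exact (d.map_add ⟨f, hA hf⟩ ⟨g, hA hg⟩).trans (by simp [hdf, hdg])
    | mul f g hf hg hdf hdg => exact (hd ⟨f, hA hf⟩ ⟨g, hA hg⟩).trans (by simp [hdf, hdg])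
  have adjoin_dense : DenseRange (Set.inclusion hA) := (denseRange_inclusion_iff hA).mpr subset_rfl
  exact DFunLike.coe_injective <| adjoin_dense.equalizer d.continuous continuous_zero <|
    funext fun f => vanishes_on_adjoin f f.2

lemma norm_map_coord_mul_le (hd : IsBPD X x d) {A : Finset ℂ} (hA : ∀ a ∈ A, a ∉ X) {c : ℂ → ℂ}
    {K : ℝ} (hK : ∀ z ∈ X, ‖∑ a ∈ A, c a / (z - a)‖ ≤ K) :
    ‖d (Rx.coord X)‖ * ‖∑ a ∈ A, c a / ((x : ℂ) - a) ^ 2‖ ≤ ‖d‖ * K := by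
  let F : Rx X := ∑ a ∈ A.attach, c a • Rx.simplePole (hA a a.2)
  have F_apply (z : X) : (F : C(X, ℂ)) z = ∑ a ∈ A, c a / ((z : ℂ) - a) := by
    simp only [F, AddSubmonoidClass.coe_finsetSum, ContinuousMap.coe_sum, Finset.sum_apply]
    exact Finset.sum_attach A fun a => c a / ((z : ℂ) - a)
  have norm_F_le : ‖F‖ ≤ K :=
    (ContinuousMap.norm_le _ ((norm_nonneg _).trans (hK x x.2))).mpr fun z =>
      F_apply z ▸ hK z z.2
  have map_F : d F = -d (Rx.coord X) * ∑ a ∈ A, c a / ((x : ℂ) - a) ^ 2 := by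
    rw [← Finset.sum_attach A fun a => c a / ((x : ℂ) - a) ^ 2, Finset.mul_sum, map_sum]
    refine Finset.sum_congr rfl fun a _ => ?_
    rw [map_smul, hd.map_simplePole, smul_eq_mul]
    ring
  calc ‖d (Rx.coord X)‖ * ‖∑ a ∈ A, c a / ((x : ℂ) - a) ^ 2‖ = ‖d F‖ := by
        rw [map_F, norm_mul, norm_neg]
    _ ≤ ‖d‖ * K := d.le_opNorm_of_le norm_F_le

end IsBPD

end PointDerivations

section SteepPoles

/-- `HasSteepPoles Y x M` says that some finite set `A` of poles off `Y` has
`∑ 1/|x - a|²` at least `M` times a uniform bound on `Y` for `∑ 1/|z - a|`. Choosing the phases of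
unimodular coefficients `c a`, one gets a rational function `∑ c a / (z - a)` whose derivative at
`x` is at least `M` times its supremum norm on `Y`. -/
def HasSteepPoles (Y : Set ℂ) (x : ℂ) (M : ℝ) : Prop :=
  ∃ A : Finset ℂ, (∀ a ∈ A, a ∉ Y) ∧ ∃ K > 0,
    (∀ z ∈ Y, ∑ a ∈ A, ‖z - a‖⁻¹ ≤ K) ∧ M * K ≤ ∑ a ∈ A, (‖x - a‖ ^ 2)⁻¹

lemma HasSteepPoles.mono {Y Y' : Set ℂ} {x : ℂ} {M M' : ℝ} (h : HasSteepPoles Y x M)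
    (hY : Y' ⊆ Y) (hM : M' ≤ M) : HasSteepPoles Y' x M' := by
  obtain ⟨A, hA, K, hK, hbound, hsteep⟩ := h
  exact ⟨A, fun a ha => notMem_subset hY (hA a ha), K, hK, fun z hz => hbound z (hY hz),
    hsteep.trans' (by gcongr)⟩

theorem IsBPD.eq_zero_of_forall_hasSteepPoles {X : Set ℂ} [CompactSpace X] {x : X}
    {d : Rx X →L[ℂ] ℂ} (hd : IsBPD X x d) (hX : ∀ M, HasSteepPoles X x M) : d = 0 := by
  refine hd.eq_zero_of_map_coord_eq_zero (norm_le_zero_iff.mp ?_)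
  by_contra! hpos
  obtain ⟨M, hM⟩ := exists_gt (‖d‖ / ‖d (Rx.coord X)‖)
  obtain ⟨A, hA, K, hK, hbound, hsteep⟩ := hX M
  let c (a : ℂ) : ℂ := (x - a) ^ 2 / (‖x - a‖ : ℂ) ^ 2
  have hxa : ∀ a ∈ A, (x : ℂ) - a ≠ 0 := fun a ha =>
    sub_ne_zero.mpr (ne_of_mem_of_not_mem x.2 (hA a ha))
  have norm_c : ∀ a ∈ A, ‖c a‖ = 1 := fun a ha => by
    simp [c, div_self (pow_ne_zero 2 (norm_ne_zero_iff.mpr (hxa a ha)))]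
  have bounded_on (z : ℂ) (hz : z ∈ X) : ‖∑ a ∈ A, c a / (z - a)‖ ≤ K :=
    (norm_sum_le_of_le A fun a ha => by rw [norm_div, norm_c a ha, one_div]).trans (hbound z hz)
  have deriv_eq : ∑ a ∈ A, c a / ((x : ℂ) - a) ^ 2 = ((∑ a ∈ A, (‖x - a‖ ^ 2)⁻¹ : ℝ) : ℂ) := by
    push_cast
    exact Finset.sum_congr rfl fun a ha => by
      rw [div_right_comm, div_self (pow_ne_zero 2 (hxa a ha)), one_div]
  have bound := hd.norm_map_coord_mul_le hA bounded_on
  rw [deriv_eq, Complex.norm_of_nonneg (by positivity)] at bound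
  have : ‖d‖ * K < ‖d (Rx.coord X)‖ * ∑ a ∈ A, (‖x - a‖ ^ 2)⁻¹ :=
    calc ‖d‖ * K < ‖d (Rx.coord X)‖ * M * K := by
          gcongr
          exact (div_lt_iff₀' hpos).mp hM
      _ ≤ _ := by rw [mul_assoc]; gcongr
  exact this.not_ge bound

lemma hasSteepPoles_of_norm_eq_one {Y : Set ℂ} (hY : Y ⊆ closedBall 0 1) {x : ℂ} (hx : ‖x‖ = 1)
    (M : ℝ) : HasSteepPoles Y x M := by
  obtain ⟨t, ht, hMt⟩ : ∃ t : ℝ, 0 < t ∧ M ≤ t⁻¹ :=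
    ⟨(|M| + 1)⁻¹, by positivity, by rw [inv_inv]; linarith [le_abs_self M]⟩
  have norm_pole : ‖(1 + t : ℝ) • x‖ = 1 + t := by
    rw [norm_smul, hx, Real.norm_of_nonneg (by positivity), mul_one]
  have dist_pole (z : ℂ) (hz : z ∈ Y) : t ≤ ‖z - (1 + t : ℝ) • x‖ := by
    linarith [norm_sub_norm_le ((1 + t : ℝ) • x) z, norm_sub_rev z ((1 + t : ℝ) • x),
      mem_closedBall_zero_iff.mp (hY hz)]
  have dist_x : ‖x - (1 + t : ℝ) • x‖ = t := by
    rw [add_smul, one_smul, sub_add_cancel_left, norm_neg, norm_smul, hx, mul_one,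
      Real.norm_of_nonneg ht.le]
  refine ⟨{(1 + t : ℝ) • x}, ?_, t⁻¹, inv_pos.mpr ht, ?_, ?_⟩
  · simp only [Finset.mem_singleton, forall_eq]
    exact fun hmem => ht.not_ge (by simpa using dist_pole _ hmem)
  · intro z hz
    rw [Finset.sum_singleton]
    exact inv_anti₀ ht (dist_pole z hz)
  · rw [Finset.sum_singleton, dist_x, sq, mul_inv]
    gcongr

end SteepPoles

section GridSums

lemma norm_int_prod_eq (v : ℤ × ℤ) : ‖v‖ = (max v.1.natAbs v.2.natAbs : ℕ) := by
  rw [Prod.norm_def, Nat.cast_max, Nat.cast_natAbs, Nat.cast_natAbs]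
  simp [Int.norm_eq_abs]

lemma one_le_norm_int_prod {v : ℤ × ℤ} (hv : v ≠ 0) : 1 ≤ ‖v‖ := by
  have : 0 < ‖v‖ := norm_pos_iff.mpr hv
  rw [norm_int_prod_eq] at this ⊢
  exact_mod_cast this

lemma mem_Icc_neg_iff_norm_le (N : ℕ) (v : ℤ × ℤ) :
    v ∈ Finset.Icc (-N : ℤ × ℤ) N ↔ ‖v‖ ≤ N := by
  rw [norm_int_prod_eq, Nat.cast_le, Finset.mem_Icc, Prod.le_def, Prod.le_def]
  simp only [Prod.fst_neg, Prod.snd_neg, Prod.fst_natCast, Prod.snd_natCast]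
  omega

lemma card_Icc_neg (N : ℕ) : (Finset.Icc (-N : ℤ × ℤ) N).card = (2 * N + 1) ^ 2 := by
  rw [Finset.card_Icc_prod, sq]
  simp only [Prod.fst_neg, Prod.snd_neg, Prod.fst_natCast, Prod.snd_natCast, Int.card_Icc]
  congr 1 <;> omega

lemma sum_box_inv_norm_le (n : ℕ) : ∑ v ∈ (Finset.box n : Finset (ℤ × ℤ)), ‖v‖⁻¹ ≤ 8 := by
  have norm_eq : ∀ v ∈ (Finset.box n : Finset (ℤ × ℤ)), ‖v‖⁻¹ = (n : ℝ)⁻¹ := fun v hv => by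
    rw [norm_int_prod_eq, Int.mem_box.mp hv]
  rw [Finset.sum_congr rfl norm_eq, Finset.sum_const, nsmul_eq_mul]
  rcases eq_or_ne n 0 with rfl | hn
  · simp
  · rw [Int.card_box hn, Nat.cast_mul, mul_assoc, mul_inv_cancel₀ (by exact_mod_cast hn)]
    norm_num

lemma sum_Icc_neg_inv_norm_le (N : ℕ) :
    ∑ v ∈ Finset.Icc (-N : ℤ × ℤ) N, ‖v‖⁻¹ ≤ 8 * N := by
  induction N with
  | zero => simp
  | succ N ih =>
    rw [← Nat.succ_eq_add_one, ← Finset.box_succ_disjUnion, Finset.sum_disjUnion]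
    push_cast
    linarith [sum_box_inv_norm_le (N + 1)]

lemma sum_inv_norm_le_of_card_le {s : Finset (ℤ × ℤ)} {N : ℕ} (hs : s.card ≤ N ^ 2) :
    ∑ v ∈ s, ‖v‖⁻¹ ≤ 9 * N := by
  classical
  let Q := Finset.Icc (-N : ℤ × ℤ) N
  have near : ∑ v ∈ s ∩ Q, ‖v‖⁻¹ ≤ 8 * N :=
    (Finset.sum_le_sum_of_subset_of_nonneg Finset.inter_subset_right
      fun _ _ _ => by positivity).trans (sum_Icc_neg_inv_norm_le N)
  have far : ∑ v ∈ s \ Q, ‖v‖⁻¹ ≤ N := by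
    rcases N.eq_zero_or_pos with rfl | hN
    · simp_all
    have term_le : ∀ v ∈ s \ Q, ‖v‖⁻¹ ≤ (N : ℝ)⁻¹ := fun v hv => by
      have := (mem_Icc_neg_iff_norm_le N v).not.mp (Finset.mem_sdiff.mp hv).2
      exact inv_anti₀ (by exact_mod_cast hN) (not_le.mp this).le
    calc ∑ v ∈ s \ Q, ‖v‖⁻¹ ≤ (s \ Q).card * (N : ℝ)⁻¹ := by
          simpa using Finset.sum_le_card_nsmul _ _ _ term_le
      _ ≤ N ^ 2 * (N : ℝ)⁻¹ := by
          gcongr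
          exact_mod_cast (Finset.card_le_card Finset.sdiff_subset).trans hs
      _ = N := by field_simp
  rw [← Finset.sum_inter_add_sum_sdiff s Q]
  linarith

/-- The point of the square grid of mesh `h` with integer coordinates `v`. -/
def gridPoint (h : ℝ) (v : ℤ × ℤ) : ℂ := ⟨h * v.1, h * v.2⟩

lemma mul_norm_le_norm_gridPoint {h : ℝ} (hh : 0 ≤ h) (v : ℤ × ℤ) :
    h * ‖v‖ ≤ ‖gridPoint h v‖ := by
  rw [Prod.norm_def, mul_max_of_nonneg _ _ hh]
  refine max_le ?_ ?_
  · simpa [gridPoint, abs_mul, abs_of_nonneg hh, Int.norm_eq_abs] using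
      Complex.abs_re_le_norm (gridPoint h v)
  · simpa [gridPoint, abs_mul, abs_of_nonneg hh, Int.norm_eq_abs] using
      Complex.abs_im_le_norm (gridPoint h v)

lemma gridPoint_sub (h : ℝ) (v w : ℤ × ℤ) :
    gridPoint h (v - w) = gridPoint h v - gridPoint h w := by
  apply Complex.ext <;> simp [gridPoint, mul_sub]

lemma mul_norm_sub_le_dist_gridPoint {h : ℝ} (hh : 0 ≤ h) (v w : ℤ × ℤ) :
    h * ‖v - w‖ ≤ dist (gridPoint h v) (gridPoint h w) := by
  rw [dist_eq_norm, ← gridPoint_sub]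
  exact mul_norm_le_norm_gridPoint hh _

lemma le_dist_gridPoint {h : ℝ} (hh : 0 ≤ h) {v w : ℤ × ℤ} (hvw : v ≠ w) :
    h ≤ dist (gridPoint h v) (gridPoint h w) :=
  (le_mul_of_one_le_right hh (one_le_norm_int_prod (sub_ne_zero.mpr hvw))).trans
    (mul_norm_sub_le_dist_gridPoint hh v w)

lemma gridPoint_injective {h : ℝ} (hh : 0 < h) : Function.Injective (gridPoint h) := by
  intro v w hvw
  by_contra hne
  exact hh.not_ge ((le_dist_gridPoint hh.le hne).trans_eq (dist_eq_zero.mpr hvw))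

lemma sum_inv_norm_sub_gridPoint_le {h r : ℝ} (hh : 0 < h) (hr : 0 < r) {s : Finset (ℤ × ℤ)}
    {N : ℕ} (hs : s.card ≤ N ^ 2) {z : ℂ} (hz : ∀ v ∈ s, r ≤ ‖z - gridPoint h v‖) :
    ∑ v ∈ s, ‖z - gridPoint h v‖⁻¹ ≤ r⁻¹ + 18 * N / h := by
  rcases s.eq_empty_or_nonempty with rfl | hne
  · rw [Finset.sum_empty]
    positivity
  obtain ⟨m, hm, hmin⟩ := s.exists_min_image (fun v => ‖z - gridPoint h v‖) hne
  -- Since `m` minimises the distance to `z`, replacing `z` by `m` at most doubles distances.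
  have far : ∀ v ∈ s.erase m, ‖z - gridPoint h v‖⁻¹ ≤ 2 / h * ‖v - m‖⁻¹ := fun v hv => by
    obtain ⟨hvm, hvs⟩ := Finset.mem_erase.mp hv
    have hpos : 0 < ‖v - m‖ := norm_pos_iff.mpr (sub_ne_zero.mpr hvm)
    have le_dist : h * ‖v - m‖ / 2 ≤ ‖z - gridPoint h v‖ := by
      have := mul_norm_sub_le_dist_gridPoint hh.le v m
      have := dist_triangle_left (gridPoint h v) (gridPoint h m) z
      have := hmin v hvs
      rw [dist_eq_norm z, dist_eq_norm z] at *
      linarith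
    calc ‖z - gridPoint h v‖⁻¹ ≤ (h * ‖v - m‖ / 2)⁻¹ := inv_anti₀ (by positivity) le_dist
      _ = 2 / h * ‖v - m‖⁻¹ := by field_simp
  have shifted_sum : ∑ v ∈ s.erase m, ‖v - m‖⁻¹ ≤ 9 * N := by
    have hcard : ((s.erase m).map (Equiv.subRight m).toEmbedding).card ≤ N ^ 2 := by
      rw [Finset.card_map]
      exact Finset.card_erase_le.trans hs
    have := sum_inv_norm_le_of_card_le hcard
    rwa [Finset.sum_map] at this
  calc ∑ v ∈ s, ‖z - gridPoint h v‖⁻¹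
      = ‖z - gridPoint h m‖⁻¹ + ∑ v ∈ s.erase m, ‖z - gridPoint h v‖⁻¹ :=
        (Finset.add_sum_erase s _ hm).symm
    _ ≤ r⁻¹ + ∑ v ∈ s.erase m, 2 / h * ‖v - m‖⁻¹ :=
        add_le_add (inv_anti₀ hr (hz m hm)) (Finset.sum_le_sum far)
    _ ≤ r⁻¹ + 2 / h * (9 * N) := by
        rw [← Finset.mul_sum]
        gcongr
    _ = r⁻¹ + 18 * N / h := by ring

lemma tendsto_sum_inv_sq_add_sq_atTop :
    Filter.Tendsto (fun N : ℕ => ∑ v ∈ Finset.range N ×ˢ Finset.range N,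
      (((v.1 : ℝ) + 1) ^ 2 + ((v.2 : ℝ) + 1) ^ 2)⁻¹) Filter.atTop Filter.atTop := by
  refine Filter.tendsto_atTop_mono (fun N => ?_)
    (Real.tendsto_sum_range_one_div_nat_succ_atTop.const_mul_atTop one_half_pos)
  rw [Finset.mul_sum, Finset.sum_product]
  refine Finset.sum_le_sum fun i hi => ?_
  -- The terms with `j ≤ i` already contribute half of `1 / (i + 1)`.
  calc 1 / 2 * (1 / ((i : ℝ) + 1))
      = ∑ j ∈ Finset.range (i + 1), (2 * ((i : ℝ) + 1) ^ 2)⁻¹ := by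
        rw [Finset.sum_const, Finset.card_range, nsmul_eq_mul]
        push_cast
        field_simp
    _ ≤ ∑ j ∈ Finset.range (i + 1), (((i : ℝ) + 1) ^ 2 + ((j : ℝ) + 1) ^ 2)⁻¹ := by
        refine Finset.sum_le_sum fun j hj => inv_anti₀ (by positivity) ?_
        have hji : (j : ℝ) ≤ i := by exact_mod_cast Finset.mem_range_succ_iff.mp hj
        rw [two_mul]
        gcongr
    _ ≤ ∑ j ∈ Finset.range N, (((i : ℝ) + 1) ^ 2 + ((j : ℝ) + 1) ^ 2)⁻¹ :=
        Finset.sum_le_sum_of_subset_of_nonneg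
          (Finset.range_subset_range.mpr (Finset.mem_range.mp hi)) fun _ _ _ => by positivity

end GridSums

section GridQuadrants

open scoped InnerProductSpace

lemma exists_int_progression {h : ℝ} (hh : 0 < h) (t u : ℝ) :
    ∃ p : ℕ → ℤ, Function.Injective p ∧ ∀ i : ℕ, 0 ≤ (h * p i - t) * u ∧
      h * (i + 1) ≤ |h * p i - t| ∧ |h * p i - t| ≤ h * (i + 2) := by
  rcases le_total 0 u with hu | hu
  · refine ⟨fun i => ⌈t / h⌉ + (i + 1), fun i j hij => by simpa using hij, fun i => ?_⟩
    have lower := (div_le_iff₀' hh).mp (Int.le_ceil (t / h))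
    have upper : h * ⌈t / h⌉ < t + h := by
      have := mul_lt_mul_of_pos_left (Int.ceil_lt_add_one (t / h)) hh
      rwa [mul_add, mul_one, mul_div_cancel₀ t hh.ne'] at this
    push_cast
    have hpos : 0 ≤ h * (⌈t / h⌉ + ((i : ℝ) + 1)) - t := by nlinarith
    rw [abs_of_nonneg hpos]
    exact ⟨mul_nonneg hpos hu, by linarith, by linarith⟩
  · refine ⟨fun i => ⌊t / h⌋ - (i + 1), fun i j hij => by simpa using hij, fun i => ?_⟩
    have upper := (le_div_iff₀' hh).mp (Int.floor_le (t / h))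
    have lower := (div_lt_iff₀' hh).mp (Int.lt_floor_add_one (t / h))
    push_cast
    have hneg : h * (⌊t / h⌋ - ((i : ℝ) + 1)) - t ≤ 0 := by nlinarith
    rw [abs_of_nonpos hneg]
    exact ⟨mul_nonneg_of_nonpos_of_nonpos hneg hu, by linarith, by linarith⟩

/-- `IsGridQuadrant h x u φ` says that `φ` enumerates the grid points of mesh `h` in a quadrant with
corner near `x`, one which lies in the half-plane through `x` with inner normal `u`; the two indices
count the grid steps from `x`, up to rounding. -/
structure IsGridQuadrant (h : ℝ) (x u : ℂ) (φ : ℕ × ℕ → ℤ × ℤ) : Prop where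
  injective : Function.Injective φ
  inner_nonneg (v : ℕ × ℕ) : 0 ≤ ⟪gridPoint h (φ v) - x, u⟫_ℝ
  le_norm (v : ℕ × ℕ) : h ≤ ‖gridPoint h (φ v) - x‖
  norm_le (v : ℕ × ℕ) : ‖gridPoint h (φ v) - x‖ ≤ h * (v.1 + v.2 + 4)
  sq_norm_le (v : ℕ × ℕ) :
    ‖gridPoint h (φ v) - x‖ ^ 2 ≤ 4 * h ^ 2 * (((v.1 : ℝ) + 1) ^ 2 + ((v.2 : ℝ) + 1) ^ 2)

lemma exists_isGridQuadrant {h : ℝ} (hh : 0 < h) (x u : ℂ) : ∃ φ, IsGridQuadrant h x u φ := by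
  obtain ⟨p, hp, hp'⟩ := exists_int_progression hh x.re u.re
  obtain ⟨q, hq, hq'⟩ := exists_int_progression hh x.im u.im
  let w (v : ℕ × ℕ) : ℂ := gridPoint h (p v.1, q v.2) - x
  have hre (v : ℕ × ℕ) : 0 ≤ (w v).re * u.re ∧ h * (v.1 + 1) ≤ |(w v).re| ∧
      |(w v).re| ≤ h * (v.1 + 2) := hp' v.1
  have him (v : ℕ × ℕ) : 0 ≤ (w v).im * u.im ∧ h * (v.2 + 1) ≤ |(w v).im| ∧
      |(w v).im| ≤ h * (v.2 + 2) := hq' v.2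
  refine ⟨Prod.map p q, hp.prodMap hq, fun v => ?_, fun v => ?_, fun v => ?_, fun v => ?_⟩
  · change 0 ≤ ⟪w v, u⟫_ℝ
    rw [Complex.inner, Complex.mul_re, Complex.conj_re, Complex.conj_im]
    linarith [(hre v).1, (him v).1]
  · exact (le_mul_of_one_le_right hh.le (by simp)).trans
      ((hre v).2.1.trans (Complex.abs_re_le_norm (w v)))
  · change ‖w v‖ ≤ _
    linarith [Complex.norm_le_abs_re_add_abs_im (w v), (hre v).2.2, (him v).2.2]
  · have add_two_le (i : ℕ) : (i : ℝ) + 2 ≤ 2 * (i + 1) := by linarith [i.cast_nonneg (α := ℝ)]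
    calc ‖w v‖ ^ 2 = |(w v).re| ^ 2 + |(w v).im| ^ 2 := by
          rw [Complex.sq_norm, Complex.normSq_apply, sq_abs, sq_abs, sq, sq]
      _ ≤ (h * (2 * (v.1 + 1))) ^ 2 + (h * (2 * (v.2 + 1))) ^ 2 := by
          gcongr
          · exact (hre v).2.2.trans (by gcongr; exact add_two_le _)
          · exact (him v).2.2.trans (by gcongr; exact add_two_le _)
      _ = _ := by ring

lemma IsGridQuadrant.hasSteepPoles {h r : ℝ} {x u : ℂ} {φ : ℕ × ℕ → ℤ × ℤ} {N : ℕ} {Y : Set ℂ}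
    (hφ : IsGridQuadrant h x u φ) (hh : 0 < h) (hr : 0 < r) (hN : 18 * N * r ≤ h)
    (hY : ∀ z ∈ Y, ∀ v ∈ Finset.range N ×ˢ Finset.range N, r ≤ ‖z - gridPoint h (φ v)‖) :
    HasSteepPoles Y x (r / (8 * h ^ 2) * ∑ v ∈ Finset.range N ×ˢ Finset.range N,
      (((v.1 : ℝ) + 1) ^ 2 + ((v.2 : ℝ) + 1) ^ 2)⁻¹) := by
  classical
  let s := Finset.range N ×ˢ Finset.range N
  let e : ℤ × ℤ ↪ ℂ := ⟨gridPoint h, gridPoint_injective hh⟩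
  refine ⟨(s.map ⟨φ, hφ.injective⟩).map e, ?_, 2 * r⁻¹, by positivity, fun z hz => ?_, ?_⟩
  · simp only [Finset.forall_mem_map]
    intro v hv hmem
    exact hr.not_ge (by simpa [e] using hY _ hmem v hv)
  · rw [Finset.sum_map]
    have hcard : (s.map ⟨φ, hφ.injective⟩).card ≤ N ^ 2 := by simp [s, sq]
    calc _ ≤ r⁻¹ + 18 * N / h := sum_inv_norm_sub_gridPoint_le hh hr hcard <|
          Finset.forall_mem_map.mpr (hY z hz)
      _ ≤ r⁻¹ + r⁻¹ := by
          gcongr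
          rwa [div_le_iff₀ hh, ← div_eq_inv_mul, le_div_iff₀ hr]
      _ = 2 * r⁻¹ := (two_mul _).symm
  · rw [Finset.sum_map, Finset.sum_map]
    calc _ = ∑ v ∈ s, (4 * h ^ 2 * (((v.1 : ℝ) + 1) ^ 2 + ((v.2 : ℝ) + 1) ^ 2))⁻¹ := by
          simp only [mul_inv, ← Finset.mul_sum, s]
          field_simp
          ring
      _ ≤ ∑ v ∈ s, (‖x - gridPoint h (φ v)‖ ^ 2)⁻¹ := by
          refine Finset.sum_le_sum fun v _ => ?_
          rw [norm_sub_rev]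
          have := hh.trans_le (hφ.le_norm v)
          exact inv_anti₀ (by positivity) (hφ.sq_norm_le v)

end GridQuadrants

section DiskPackings

/-- A family of closed disks in the open unit disk, pairwise disjoint and non-degenerate, each given
as a pair (centre, radius). -/
structure IsDiskPacking (S : Set (ℂ × ℝ)) : Prop where
  radius_pos : ∀ d ∈ S, 0 < d.2
  norm_add_radius_lt_one : ∀ d ∈ S, ‖d.1‖ + d.2 < 1
  separated : S.Pairwise fun d e => d.2 + e.2 < dist d.1 e.1

/-- The set left over when the open disks of the family `S` are removed from the plane. -/
def offHoles (S : Set (ℂ × ℝ)) : Set ℂ := {z | ∀ d ∈ S, d.2 ≤ dist z d.1}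

/-- The contribution `s/δ²` of a hole of radius `s` to the sum of the theorem; for a disk inside the
unit disk, its distance `δ` to the unit circle is `1 - ‖centre‖ - s`. -/
noncomputable def holeWeight (d : ℂ × ℝ) : ℝ := d.2 / (1 - ‖d.1‖ - d.2) ^ 2

lemma offHoles_anti {S T : Set (ℂ × ℝ)} (h : S ⊆ T) : offHoles T ⊆ offHoles S :=
  fun _ hz d hd => hz d (h hd)

namespace IsDiskPacking

variable {S : Set (ℂ × ℝ)} {d : ℂ × ℝ}

lemma empty : IsDiskPacking ∅ := ⟨by simp, by simp, pairwise_empty _⟩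

lemma radius_lt_one (hS : IsDiskPacking S) (hd : d ∈ S) : d.2 < 1 := by
  linarith [hS.norm_add_radius_lt_one d hd, norm_nonneg d.1]

lemma holeWeight_nonneg (hS : IsDiskPacking S) (hd : d ∈ S) : 0 ≤ holeWeight d :=
  div_nonneg (hS.radius_pos d hd).le (sq_nonneg _)

lemma radius_le_holeWeight (hS : IsDiskPacking S) (hd : d ∈ S) : d.2 ≤ holeWeight d := by
  have hpos : 0 < 1 - ‖d.1‖ - d.2 := by linarith [hS.norm_add_radius_lt_one d hd]
  have hle : 1 - ‖d.1‖ - d.2 ≤ 1 := by linarith [hS.radius_pos d hd, norm_nonneg d.1]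
  exact le_div_self (hS.radius_pos d hd).le (by positivity) (pow_le_one₀ hpos.le hle)

lemma iUnion {G : ℕ → Set (ℂ × ℝ)} (hG : ∀ k, IsDiskPacking (G k)) (hmono : Monotone G) :
    IsDiskPacking (⋃ k, G k) where
  radius_pos := by simpa only [mem_iUnion, forall_exists_index] using
    fun d k => (hG k).radius_pos d
  norm_add_radius_lt_one := by simpa only [mem_iUnion, forall_exists_index] using
    fun d k => (hG k).norm_add_radius_lt_one d
  separated := (pairwise_iUnion hmono.directed_le).mpr fun k => (hG k).separated

lemma countable (hS : IsDiskPacking S) : S.Countable := by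
  have disjoint : S.PairwiseDisjoint fun d => ball d.1 d.2 := fun d hd e he hde =>
    ball_disjoint_ball (hS.separated hd he hde).le
  exact disjoint.countable_of_isOpen (fun _ _ => isOpen_ball)
    fun d hd => nonempty_ball.mpr (hS.radius_pos d hd)

end IsDiskPacking

lemma exists_gap {G : Finset (ℂ × ℝ)}
    (hG : (G : Set (ℂ × ℝ)).Pairwise fun d e => d.2 + e.2 < dist d.1 e.1) {δ : ℝ} (hδ : 0 < δ) :
    ∃ ρ, 0 < ρ ∧ ρ ≤ δ ∧
      (G : Set (ℂ × ℝ)).Pairwise fun d e => d.2 + e.2 + 4 * ρ ≤ dist d.1 e.1 := by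
  have gap_tendsto (c : ℝ) :
      Filter.Tendsto (fun ρ => c + 4 * ρ) (nhdsWithin 0 (Ioi 0)) (nhds c) := by
    have : Continuous fun ρ : ℝ => c + 4 * ρ := by fun_prop
    simpa using (this.tendsto 0).mono_left nhdsWithin_le_nhds
  have eventually_gap : ∀ᶠ ρ : ℝ in nhdsWithin 0 (Ioi 0), ∀ d ∈ G, ∀ e ∈ G, d ≠ e →
      d.2 + e.2 + 4 * ρ ≤ dist d.1 e.1 := by
    rw [Filter.eventually_all_finset]
    intro d hd
    rw [Filter.eventually_all_finset]
    intro e he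
    rcases eq_or_ne d e with rfl | hde
    · simp
    · filter_upwards [(gap_tendsto _).eventually_le_const (hG hd he hde)] with ρ hρ _ using hρ
  obtain ⟨ρ, hgap, hρ⟩ := (eventually_gap.and (Ioc_mem_nhdsGT hδ)).exists
  exact ⟨ρ, hρ.1, hρ.2, fun d hd e he => hgap d hd e he⟩

open scoped InnerProductSpace in
/-- At most one disk comes close to `x`, so the half-plane facing away from that disk works. -/
lemma exists_halfPlane_avoiding {S : Set (ℂ × ℝ)} {ρ : ℝ} (hS : ∀ d ∈ S, 0 ≤ d.2)
    (hgap : S.Pairwise fun d e => d.2 + e.2 + 4 * ρ ≤ dist d.1 e.1) {x : ℂ} (hx : x ∈ offHoles S) :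
    ∃ u : ℂ, ∀ z, 0 ≤ ⟪z - x, u⟫_ℝ → ‖z - x‖ ≤ ρ →
      ∀ d ∈ S, d.2 + ρ ≤ dist z d.1 ∨ d.2 ^ 2 + ‖z - x‖ ^ 2 ≤ dist z d.1 ^ 2 := by
  by_cases hnear : ∃ e ∈ S, dist x e.1 < e.2 + 2 * ρ
  · obtain ⟨e, he, hxe⟩ := hnear
    refine ⟨x - e.1, fun z hz hzx d hd => ?_⟩
    rcases eq_or_ne d e with rfl | hde
    · right
      have radius_le : d.2 ^ 2 ≤ ‖x - d.1‖ ^ 2 :=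
        pow_le_pow_left₀ (hS d hd) (dist_eq_norm x d.1 ▸ hx d hd) 2
      rw [dist_eq_norm, ← sub_add_sub_cancel z x d.1, norm_add_sq_real]
      linarith
    · left
      rw [← dist_eq_norm] at hzx
      linarith [hgap hd he hde, dist_triangle4 d.1 z x e.1, dist_comm d.1 z]
  · push Not at hnear
    refine ⟨0, fun z _ hzx d hd => Or.inl ?_⟩
    rw [← dist_eq_norm] at hzx
    linarith [hnear d hd, dist_triangle_left x d.1 z]

end DiskPackings

section Refinement

open Classical in
/-- The indices of the points of the grid of mesh `h` in the closed disk of radius `T` about `0` at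
which a disk of radius `r` stays clear of the disks of `G`. The box of indices makes the set finite
and is no restriction as long as `T ≤ 1`. -/
noncomputable def gridIndices (G : Finset (ℂ × ℝ)) (h r T : ℝ) : Finset (ℤ × ℤ) :=
  {v ∈ Finset.Icc (-⌊h⁻¹⌋₊ : ℤ × ℤ) ⌊h⁻¹⌋₊ |
    ‖gridPoint h v‖ ≤ T ∧ ∀ d ∈ G, d.2 + r < dist (gridPoint h v) d.1}

open Classical in
/-- The family `G` with a disk of radius `r` added at each point selected by `gridIndices`. -/
noncomputable def addGridDisks (G : Finset (ℂ × ℝ)) (h r T : ℝ) : Finset (ℂ × ℝ) :=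
  G ∪ (gridIndices G h r T).image fun v => (gridPoint h v, r)

variable {G : Finset (ℂ × ℝ)} {h r T : ℝ}

lemma mem_gridIndices (hh : 0 < h) (hT : T ≤ 1) {v : ℤ × ℤ} :
    v ∈ gridIndices G h r T ↔
      ‖gridPoint h v‖ ≤ T ∧ ∀ d ∈ G, d.2 + r < dist (gridPoint h v) d.1 := by
  rw [gridIndices, Finset.mem_filter, and_iff_right_iff_imp, mem_Icc_neg_iff_norm_le]
  rintro ⟨hv, -⟩
  have norm_le : ‖v‖ ≤ h⁻¹ := by
    rw [← one_div, le_div_iff₀' hh]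
    exact (mul_norm_le_norm_gridPoint hh.le v).trans (hv.trans hT)
  rw [norm_int_prod_eq] at norm_le ⊢
  exact_mod_cast Nat.le_floor norm_le

lemma card_gridIndices_le (hh : 0 < h) (hh1 : h ≤ 1) :
    ((gridIndices G h r T).card : ℝ) ≤ 9 / h ^ 2 := by
  have side_le : 2 * (⌊h⁻¹⌋₊ : ℝ) + 1 ≤ 3 / h := by
    rw [div_eq_mul_inv]
    linarith [Nat.floor_le (inv_nonneg.mpr hh.le), (one_le_inv₀ hh).mpr hh1]
  calc ((gridIndices G h r T).card : ℝ) ≤ ((2 * ⌊h⁻¹⌋₊ + 1) ^ 2 : ℕ) := by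
        rw [← card_Icc_neg]
        exact_mod_cast Finset.card_filter_le _ _
    _ ≤ (3 / h) ^ 2 := by
        push_cast
        gcongr
    _ = 9 / h ^ 2 := by ring

lemma subset_addGridDisks : G ⊆ addGridDisks G h r T := Finset.subset_union_left

lemma mem_addGridDisks (hh : 0 < h) (hT : T ≤ 1) {d : ℂ × ℝ} :
    d ∈ addGridDisks G h r T ↔ d ∈ G ∨ ∃ v, (‖gridPoint h v‖ ≤ T ∧
      ∀ d ∈ G, d.2 + r < dist (gridPoint h v) d.1) ∧ (gridPoint h v, r) = d := by
  simp only [addGridDisks, Finset.mem_union, Finset.mem_image, mem_gridIndices hh hT]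

lemma isDiskPacking_addGridDisks (hG : IsDiskPacking G) (hr : 0 < r) (hrh : 2 * r < h)
    (hT : T + r < 1) : IsDiskPacking (addGridDisks G h r T) := by
  have hh : 0 < h := by linarith
  have mem_iff {d : ℂ × ℝ} := mem_addGridDisks (G := G) (r := r) hh (by linarith : T ≤ 1) (d := d)
  refine ⟨fun d hd => ?_, fun d hd => ?_, fun d hd e he hde => ?_⟩
  · rcases mem_iff.mp hd with hd | ⟨v, -, rfl⟩
    exacts [hG.radius_pos d hd, hr]
  · rcases mem_iff.mp hd with hd | ⟨v, hv, rfl⟩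
    · exact hG.norm_add_radius_lt_one d hd
    · exact (add_le_add_left hv.1 r).trans_lt hT
  · rcases mem_iff.mp hd with hd | ⟨v, hv, rfl⟩ <;> rcases mem_iff.mp he with he | ⟨w, hw, rfl⟩
    · exact hG.separated hd he hde
    · rw [dist_comm]
      exact hw.2 d hd
    · rw [add_comm]
      exact hv.2 e he
    · have hvw : v ≠ w := fun hvw => hde (by rw [hvw])
      linarith [le_dist_gridPoint hh.le hvw]

lemma sum_holeWeight_addGridDisks_le (hh : 0 < h) (hh1 : h ≤ 1) (hr : 0 < r) (hT : T + r < 1) :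
    ∑ d ∈ addGridDisks G h r T, holeWeight d ≤
      ∑ d ∈ G, holeWeight d + 9 / h ^ 2 * (r / (1 - T - r) ^ 2) := by
  classical
  have weight_le : ∀ v ∈ gridIndices G h r T,
      holeWeight (gridPoint h v, r) ≤ r / (1 - T - r) ^ 2 := fun v hv => by
    have hv := ((mem_gridIndices hh (by linarith)).mp hv).1
    have hpos : 0 < 1 - T - r := by linarith
    unfold holeWeight
    gcongr
  have disjoint : Disjoint G ((gridIndices G h r T).image fun v => (gridPoint h v, r)) := by
    rw [Finset.disjoint_right, Finset.forall_mem_image]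
    intro v hv hmem
    have := ((mem_gridIndices hh (by linarith)).mp hv).2 _ hmem
    rw [dist_self] at this
    linarith
  have hinj : Function.Injective fun v => (gridPoint h v, r) := fun v w hvw =>
    gridPoint_injective hh (congrArg Prod.fst hvw)
  rw [addGridDisks, Finset.sum_union disjoint, Finset.sum_image hinj.injOn]
  gcongr
  calc ∑ v ∈ gridIndices G h r T, holeWeight (gridPoint h v, r)
      ≤ (gridIndices G h r T).card * (r / (1 - T - r) ^ 2) := by
        simpa only [nsmul_eq_mul] using Finset.sum_le_card_nsmul _ _ _ weight_le
    _ ≤ 9 / h ^ 2 * (r / (1 - T - r) ^ 2) := by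
        gcongr
        exact card_gridIndices_le hh hh1

lemma IsDiskPacking.hasSteepPoles_addGridDisks (hG : IsDiskPacking G) {ρ : ℝ} {N : ℕ} {x : ℂ}
    (hgap : (G : Set (ℂ × ℝ)).Pairwise fun d e => d.2 + e.2 + 4 * ρ ≤ dist d.1 e.1)
    (hh : 0 < h) (hr : 0 < r) (hNρ : 2 * h * (N + 1) ≤ ρ) (hrρ : r < ρ) (hrh : 3 * r ≤ h ^ 2)
    (hNr : 18 * N * r ≤ h) (hT : T ≤ 1) (hxT : ‖x‖ + ρ ≤ T)
    (hx : x ∈ offHoles (addGridDisks G h r T)) :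
    HasSteepPoles (offHoles (addGridDisks G h r T)) x
      (r / (8 * h ^ 2) * ∑ v ∈ Finset.range N ×ˢ Finset.range N,
        (((v.1 : ℝ) + 1) ^ 2 + ((v.2 : ℝ) + 1) ^ 2)⁻¹) := by
  obtain ⟨u, hu⟩ := exists_halfPlane_avoiding (fun d hd => (hG.radius_pos d hd).le) hgap
    (offHoles_anti (Finset.coe_subset.mpr subset_addGridDisks) hx)
  obtain ⟨φ, hφ⟩ := exists_isGridQuadrant hh x u
  refine hφ.hasSteepPoles hh hr hNr fun z hz v hv => ?_
  suffices (gridPoint h (φ v), r) ∈ addGridDisks G h r T from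
    (hz _ this).trans_eq (dist_eq_norm _ _)
  have norm_le : ‖gridPoint h (φ v) - x‖ ≤ ρ := by
    have index_le : (v.1 : ℝ) + v.2 + 4 ≤ 2 * (N + 1) := by
      rw [Finset.mem_product, Finset.mem_range, Finset.mem_range] at hv
      exact_mod_cast (by omega : v.1 + v.2 + 4 ≤ 2 * (N + 1))
    nlinarith [hφ.norm_le v]
  refine (mem_addGridDisks hh hT).mpr (Or.inr ⟨φ v, ⟨?_, fun d hd => ?_⟩, rfl⟩)
  · linarith [norm_sub_norm_le (gridPoint h (φ v)) x]
  · rcases hu _ (hφ.inner_nonneg v) norm_le d hd with hfar | hnear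
    · linarith
    · have sq_le : h ^ 2 ≤ ‖gridPoint h (φ v) - x‖ ^ 2 := by gcongr; exact hφ.le_norm v
      refine lt_of_pow_lt_pow_left₀ 2 dist_nonneg ?_
      have r_lt_one : r < 1 := by linarith [norm_nonneg x]
      nlinarith [hG.radius_lt_one hd, hG.radius_pos d hd]

/-- The radii `ε h²` keep the total weight `≲ ε` however fine the grid is, while the steepness
`ε ∑ 1/(i² + j²)` grows with the number `N` of grid lines near `x`. -/
theorem IsDiskPacking.exists_steep_refinement (hG : IsDiskPacking G) {t δ : ℝ} (ht0 : 0 ≤ t)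
    (ht : t < 1) (hδ : 0 < δ) (M : ℝ) :
    ∃ G' : Finset (ℂ × ℝ), G ⊆ G' ∧ IsDiskPacking G' ∧
      ∑ d ∈ G', holeWeight d ≤ ∑ d ∈ G, holeWeight d + δ ∧
      ∀ x ∈ offHoles G', ‖x‖ ≤ t → HasSteepPoles (offHoles G') x M := by
  have ht' : 0 < 1 - t := by linarith
  obtain ⟨ρ, hρ, hρt, hgap⟩ := exists_gap hG.separated (by positivity : 0 < (1 - t) / 4)
  obtain ⟨ε, hε, hε3, hεδ⟩ : ∃ ε > 0, ε ≤ 1 / 3 ∧ ε ≤ δ * (1 - t) ^ 2 / 144 :=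
    ⟨min (1 / 3) (δ * (1 - t) ^ 2 / 144), by positivity, min_le_left _ _, min_le_right _ _⟩
  obtain ⟨N, hN⟩ := (tendsto_sum_inv_sq_add_sq_atTop.eventually_ge_atTop (8 * M / ε)).exists
  obtain ⟨h, hh, hNρ⟩ : ∃ h > 0, 2 * h * (N + 1) = ρ :=
    ⟨ρ / (2 * (N + 1)), by positivity, by field_simp⟩
  have hh8 : h ≤ 1 / 8 := by nlinarith [N.cast_nonneg (α := ℝ)]
  have hhρ : h < ρ := by nlinarith [N.cast_nonneg (α := ℝ)]
  have hr : 0 < ε * h ^ 2 := by positivity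
  have hr3 : 3 * (ε * h ^ 2) ≤ h ^ 2 := by nlinarith [sq_nonneg h]
  have hrh : 2 * (ε * h ^ 2) < h := by nlinarith
  have hT : (1 + t) / 2 + ε * h ^ 2 < 1 := by linarith
  refine ⟨addGridDisks G h (ε * h ^ 2) ((1 + t) / 2), subset_addGridDisks,
    isDiskPacking_addGridDisks hG hr hrh hT,
    (sum_holeWeight_addGridDisks_le hh (by linarith) hr hT).trans ?_, fun x hx hxt =>
    (hG.hasSteepPoles_addGridDisks hgap hh hr hNρ.le (by linarith) hr3 ?_ (by linarith)
      (by linarith) hx).mono subset_rfl ?_⟩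
  · gcongr
    calc 9 / h ^ 2 * (ε * h ^ 2 / (1 - (1 + t) / 2 - ε * h ^ 2) ^ 2)
        ≤ 9 / h ^ 2 * (ε * h ^ 2 / ((1 - t) / 4) ^ 2) := by
          gcongr
          linarith
      _ = 144 * ε / (1 - t) ^ 2 := by
          field_simp
          ring
      _ ≤ δ := by
          rw [div_le_iff₀ (by positivity)]
          linarith
  · nlinarith [mul_nonneg N.cast_nonneg hh.le]
  · calc M = ε / 8 * (8 * M / ε) := by field_simp
      _ ≤ _ := by
          rw [mul_div_mul_comm, div_self (by positivity), mul_one]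
          gcongr

end Refinement

section SteepPackings

lemma exists_seq_steep_refinements {C : ℝ} (hC : 0 < C) :
    ∃ G : ℕ → Finset (ℂ × ℝ), Monotone G ∧ (∀ k, IsDiskPacking (G k)) ∧
      (∀ k, ∑ d ∈ G k, holeWeight d < C) ∧
      ∀ k : ℕ, ∀ x ∈ offHoles (G (k + 1)), ‖x‖ ≤ 1 - 1 / ((k : ℝ) + 1) →
        HasSteepPoles (offHoles (G (k + 1))) x k := by
  let State := {G : Finset (ℂ × ℝ) // IsDiskPacking G ∧ ∑ d ∈ G, holeWeight d < C}
  have refine_state (k : ℕ) (G : State) : ∃ G' : State, G.1 ⊆ G'.1 ∧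
      ∀ x ∈ offHoles G'.1, ‖x‖ ≤ 1 - 1 / ((k : ℝ) + 1) → HasSteepPoles (offHoles G'.1) x k := by
    have slack : 0 < (C - ∑ d ∈ G.1, holeWeight d) / 2 := half_pos (sub_pos.mpr G.2.2)
    have hk1 : 1 / ((k : ℝ) + 1) ≤ 1 := by
      rw [div_le_one (by positivity)]
      linarith [k.cast_nonneg (α := ℝ)]
    obtain ⟨G', hsub, hG', hsum, hsteep⟩ := G.2.1.exists_steep_refinement (sub_nonneg.mpr hk1)
      (sub_lt_self 1 (by positivity)) slack k
    exact ⟨⟨G', hG', by linarith⟩, hsub, hsteep⟩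
  choose next hsub hsteep using refine_state
  let G (k : ℕ) : State := k.rec ⟨∅, by simpa using IsDiskPacking.empty, by simpa using hC⟩ next
  exact ⟨fun k => (G k).1, monotone_nat_of_le_succ fun k => hsub k (G k), fun k => (G k).2.1,
    fun k => (G k).2.2, fun k => hsteep k (G k)⟩

theorem exists_isDiskPacking_hasSteepPoles {C : ℝ} (hC : 0 < C) :
    ∃ S : Set (ℂ × ℝ), IsDiskPacking S ∧ Summable (fun d : S => holeWeight d) ∧
      ∑' d : S, holeWeight d ≤ C ∧
      ∀ x ∈ offHoles S, ‖x‖ < 1 → ∀ M, HasSteepPoles (offHoles S) x M := by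
  obtain ⟨G, hmono, hG, hweight, hsteep⟩ := exists_seq_steep_refinements hC
  have hmono' : Monotone fun k => (G k : Set (ℂ × ℝ)) := fun _ _ hkl =>
    Finset.coe_subset.mpr (hmono hkl)
  let S : Set (ℂ × ℝ) := ⋃ k, G k
  have hS : IsDiskPacking S := .iUnion hG hmono'
  have sum_le (s : Finset S) : ∑ d ∈ s, holeWeight d ≤ C := by
    obtain ⟨k, hk⟩ := hmono'.directed_le.exists_mem_subset_of_finset_subset_biUnion
      (Finset.map_subtype_subset s)
    calc ∑ d ∈ s, holeWeight d = ∑ d ∈ s.map (Function.Embedding.subtype _), holeWeight d :=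
          (Finset.sum_map s (Function.Embedding.subtype _) holeWeight).symm
      _ ≤ ∑ d ∈ G k, holeWeight d :=
          Finset.sum_le_sum_of_subset_of_nonneg (Finset.coe_subset.mp hk)
            fun d hd _ => (hG k).holeWeight_nonneg hd
      _ ≤ C := (hweight k).le
  have weight_nonneg (d : S) : 0 ≤ holeWeight d := hS.holeWeight_nonneg d.2
  refine ⟨S, hS, summable_of_sum_le weight_nonneg sum_le,
    Real.tsum_le_of_sum_le weight_nonneg sum_le, fun x hx hx1 M => ?_⟩
  have eventually_inside : ∀ᶠ k : ℕ in Filter.atTop, ‖x‖ ≤ 1 - 1 / ((k : ℝ) + 1) :=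
    Filter.Tendsto.eventually_const_le hx1 <| by
      simpa using tendsto_const_nhds.sub (tendsto_one_div_add_atTop_nhds_zero_nat (𝕜 := ℝ))
  obtain ⟨k, hxk, hMk⟩ := (eventually_inside.and
    (tendsto_natCast_atTop_atTop.eventually_ge_atTop M)).exists
  have off_subset : offHoles S ⊆ offHoles (G (k + 1)) :=
    offHoles_anti (subset_iUnion (fun k => (G k : Set (ℂ × ℝ))) (k + 1))
  exact (hsteep k x (off_subset hx) hxk).mono off_subset hMk

end SteepPackings

section PackingCheese

lemma le_distToCircle_ball (a : ℂ) {r : ℝ} (hr : 0 < r) :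
    1 - ‖a‖ - r ≤ distToCircle (ball a r) := by
  refine le_csInf ⟨_, a, mem_ball_self hr, 1, by simp, rfl⟩ ?_
  rintro _ ⟨z, hz, w, hw, rfl⟩
  have := dist_triangle4 w z a 0
  rw [dist_zero_right, dist_zero_right, mem_sphere_zero_iff_norm.mp hw, dist_comm w z] at this
  linarith [mem_ball.mp hz]

namespace IsDiskPacking

variable {S : Set (ℂ × ℝ)} (hS : IsDiskPacking S)

/-- An arbitrary injective numbering of the disks of a packing. -/
noncomputable def index : S → ℕ := (Set.countable_iff_exists_injective.mp hS.countable).choose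

/-- The sequence of disks with the numbering `index`; an unused number carries the pair `0`, a disk
of radius `0`. -/
noncomputable def hole : ℕ → ℂ × ℝ := Function.extend hS.index Subtype.val 0

lemma index_injective : Function.Injective hS.index :=
  (Set.countable_iff_exists_injective.mp hS.countable).choose_spec

lemma hole_index (d : S) : hS.hole (hS.index d) = d := hS.index_injective.extend_apply _ _ d

lemma hole_eq_zero {n : ℕ} (hn : n ∉ range hS.index) : hS.hole n = 0 :=
  Function.extend_apply' _ _ n hn

lemma exists_index_eq {n : ℕ} (hn : 0 < (hS.hole n).2) : ∃ d : S, hS.index d = n := by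
  by_contra hrange
  rw [hS.hole_eq_zero hrange] at hn
  exact lt_irrefl 0 hn

lemma hole_radius_nonneg (n : ℕ) : 0 ≤ (hS.hole n).2 := by
  by_cases hn : n ∈ range hS.index
  · obtain ⟨d, rfl⟩ := hn
    rw [hole_index]
    exact (hS.radius_pos d d.2).le
  · rw [hS.hole_eq_zero hn, Prod.snd_zero]

lemma hasSum_comp_hole {f : ℂ × ℝ → ℝ} (hf0 : f 0 = 0) (hf : Summable fun d : S => f d) :
    HasSum (f ∘ hS.hole) (∑' d : S, f d) := by
  refine (hS.index_injective.hasSum_iff fun n hn => ?_).mp ?_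
  · rw [Function.comp_apply, hS.hole_eq_zero hn, hf0]
  · simpa only [Function.comp_def, hole_index] using hf.hasSum

/-- The Swiss cheese that removes the disks of a packing from the closed unit disk. -/
noncomputable def cheese : SwissCheese where
  a n := n.casesOn 0 fun n => (hS.hole n).1
  r n := n.casesOn 1 fun n => (hS.hole n).2
  r_nonneg n := n.casesOn zero_le_one hS.hole_radius_nonneg

lemma exists_of_mem_sig_cheese {n : ℕ} (hn : n ∈ hS.cheese.sig) :
    ∃ d : S, n = hS.index d + 1 ∧ hS.cheese.a n = d.1.1 ∧ hS.cheese.r n = d.1.2 := by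
  obtain ⟨hn1, hpos⟩ := hn
  obtain ⟨n, rfl⟩ := Nat.exists_eq_add_of_le' hn1
  obtain ⟨d, rfl⟩ := hS.exists_index_eq hpos
  exact ⟨d, rfl, congrArg Prod.fst (hS.hole_index d), congrArg Prod.snd (hS.hole_index d)⟩

theorem isClassical_cheese (hweight : Summable fun d : S => holeWeight d) :
    hS.cheese.IsClassical := by
  refine ⟨?_, one_pos, fun k hk => ?_⟩
  · have radius_summable : Summable fun d : S => d.1.2 :=
      hweight.of_nonneg_of_le (fun d => (hS.radius_pos d d.2).le)
        fun d => hS.radius_le_holeWeight d.2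
    exact (hS.hasSum_comp_hole (f := Prod.snd) rfl radius_summable).summable
  obtain ⟨d, rfl, ha, hr⟩ := hS.exists_of_mem_sig_cheese hk
  rw [ha, hr]
  refine ⟨?_, fun l hl hlk => ?_⟩
  · refine closedBall_subset_ball' ?_
    change d.1.2 + dist d.1.1 0 < 1
    rw [dist_zero_right, add_comm]
    exact hS.norm_add_radius_lt_one d d.2
  · obtain ⟨e, rfl, ha', hr'⟩ := hS.exists_of_mem_sig_cheese hl
    have hde : (d : ℂ × ℝ) ≠ e := fun h => hlk (by rw [Subtype.ext h])
    rw [ha', hr']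
    exact (closedBall_disjoint_closedBall (hS.separated d.2 e.2 hde)).inter_eq

lemma cheeseSet_cheese : hS.cheese.cheeseSet = closedBall 0 1 ∩ offHoles S := by
  refine Set.ext fun z => and_congr_right fun _ => ?_
  change (z ∉ ⋃ n ∈ Ici 1, ball (hS.cheese.a n) (hS.cheese.r n)) ↔ z ∈ offHoles S
  simp only [mem_iUnion, mem_ball, not_exists, not_lt]
  refine ⟨fun hz d hd => ?_, fun hz n hn => ?_⟩
  · have := hz (hS.index ⟨d, hd⟩ + 1) (Nat.le_add_left 1 _)
    change (hS.hole _).2 ≤ dist z (hS.hole _).1 at this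
    rwa [hS.hole_index] at this
  · rcases (hS.cheese.r_nonneg n).eq_or_lt with hr | hr
    · exact hr ▸ dist_nonneg
    · obtain ⟨d, -, ha, hr⟩ := hS.exists_of_mem_sig_cheese ⟨hn, hr⟩
      rw [ha, hr]
      exact hz d d.2

lemma sphere_subset_cheeseSet_cheese : sphere 0 1 ⊆ hS.cheese.cheeseSet := by
  rw [cheeseSet_cheese]
  refine fun z hz => ⟨sphere_subset_closedBall hz, fun d hd => ?_⟩
  have := norm_sub_norm_le z d.1
  rw [mem_sphere_zero_iff_norm.mp hz, ← dist_eq_norm] at this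
  linarith [hS.norm_add_radius_lt_one d hd]

lemma div_sq_distT_cheese_le (n : ℕ) :
    hS.cheese.r (n + 1) / distT hS.cheese n ^ 2 ≤ holeWeight (hS.hole n) := by
  change (hS.hole n).2 / _ ≤ (hS.hole n).2 / _
  rcases (hS.hole_radius_nonneg n).eq_or_lt with hr | hr
  · rw [← hr, zero_div, zero_div]
  · obtain ⟨d, rfl⟩ := hS.exists_index_eq hr
    have distT_eq : distT hS.cheese (hS.index d) =
        distToCircle (ball (hS.hole (hS.index d)).1 (hS.hole (hS.index d)).2) := if_pos hr
    have dist_pos : 0 < 1 - ‖(hS.hole (hS.index d)).1‖ - (hS.hole (hS.index d)).2 := by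
      rw [hole_index]
      linarith [hS.norm_add_radius_lt_one d d.2]
    rw [distT_eq]
    gcongr
    exact le_distToCircle_ball _ hr

theorem summable_div_sq_distT_cheese (hweight : Summable fun d : S => holeWeight d) :
    (Summable fun n => hS.cheese.r (n + 1) / distT hS.cheese n ^ 2) ∧
      ∑' n, hS.cheese.r (n + 1) / distT hS.cheese n ^ 2 ≤ ∑' d : S, holeWeight d := by
  have hasSum_weight := hS.hasSum_comp_hole (f := holeWeight) (by simp [holeWeight]) hweight
  have hsum : Summable fun n => hS.cheese.r (n + 1) / distT hS.cheese n ^ 2 :=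
    hasSum_weight.summable.of_nonneg_of_le
      (fun n => div_nonneg (hS.cheese.r_nonneg _) (sq_nonneg _)) hS.div_sq_distT_cheese_le
  exact ⟨hsum, hasSum_le hS.div_sq_distT_cheese_le hsum.hasSum hasSum_weight⟩

end IsDiskPacking

end PackingCheese

/-- for each `C > 0` there is a classical abstract Swiss cheese `B` with
`b₀ = 0`, `s₀ = 1`, `𝕋 ⊆ X_B`, no non-zero bounded point derivations on `R(X_B)`, and
`∑_{n ≥ 1} s_n/d_n² ≤ C`. -/
theorem stmt_18 (Cb : ℝ) (hCb : 0 < Cb) :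
    ∃ B : SwissCheese, B.IsClassical ∧ B.a 0 = 0 ∧ B.r 0 = 1 ∧
      sphere (0 : ℂ) 1 ⊆ B.cheeseSet ∧
      (∀ (x : B.cheeseSet) (d : Rx B.cheeseSet →L[ℂ] ℂ), IsBPD B.cheeseSet x d → d = 0) ∧
      (Summable fun n => B.r (n + 1) / distT B n ^ 2) ∧
      (∑' n, B.r (n + 1) / distT B n ^ 2) ≤ Cb := by
  obtain ⟨S, hS, hweight, hweightC, hsteep⟩ := exists_isDiskPacking_hasSteepPoles hCb
  obtain ⟨hsum, hsum_le⟩ := hS.summable_div_sq_distT_cheese hweight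
  refine ⟨hS.cheese, hS.isClassical_cheese hweight, rfl, rfl, hS.sphere_subset_cheeseSet_cheese,
    fun x d hd => hd.eq_zero_of_forall_hasSteepPoles fun M => ?_, hsum, hsum_le.trans hweightC⟩
  have subset_disk : hS.cheese.cheeseSet ⊆ closedBall 0 1 :=
    hS.cheeseSet_cheese.trans_subset inter_subset_left
  have subset_off : hS.cheese.cheeseSet ⊆ offHoles S :=
    hS.cheeseSet_cheese.trans_subset inter_subset_right
  rcases (mem_closedBall_zero_iff.mp (subset_disk x.2)).eq_or_lt with hx | hx
  · exact hasSteepPoles_of_norm_eq_one subset_disk hx M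
  · exact (hsteep x (subset_off x.2) hx M).mono subset_off le_rfl
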